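/- arXiv:2103.15947 — 2 statements merged into one kernel-verified Lean document; each statement's English description precedes it below -/
import Mathlib

section
/- Suppose F : X → ℝ is differentiable with L_W-Lipschitz gradient (F is L_W-smooth), and the FLT iterates satisfy W^t − W^{t−1} = −η Ā ∇F(W^{t−1}) for all t ≥ 1, where η > 0 and Ā is an M × M real matrix acting by left multiplication. Then for every t ≥ 1, F(W^t) − F(W^{t−1}) ≤ (−1/(2η) + L_W/2)·‖W^t − W^{t−1}‖² + (η/2)·‖∇F(W^{t−1}) − Ā·∇F(W^{t−1})‖². (Equation (17)/(eq:17) of the paper's convergence proof.) -/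
open scoped RealInnerProductSpace

/-- Left multiplication by an `M × M` matrix `A` on the space of `M × d` real matrices,
realized as the Euclidean space `EuclideanSpace ℝ (Fin M × Fin d)` (with the Frobenius
inner product), via the Kronecker product `A ⊗ I_d`. -/
noncomputable def matLeftMul (M d : ℕ) (A : Matrix (Fin M) (Fin M) ℝ) :
    EuclideanSpace ℝ (Fin M × Fin d) →L[ℝ] EuclideanSpace ℝ (Fin M × Fin d) :=
  LinearMap.toContinuousLinearMap
    (Matrix.toEuclideanLin (Matrix.kroneckerMap (· * ·) A (1 : Matrix (Fin d) (Fin d) ℝ)))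

/-!
Comparing the remainder `F y - F x - ⟪∇F x, y - x⟫` along the segment from `x` to `y` with a
quadratic gives the descent lemma `F y - F x ≤ ⟪∇F x, y - x⟫ + L / 2 * ‖y - x‖ ^ 2`. For a step
`y - x = -η v` in any direction `v`, expanding `‖∇F x - v‖ ^ 2` turns the inner product into
`-‖y - x‖ ^ 2 / (2 η) + η / 2 * ‖∇F x - v‖ ^ 2 - η / 2 * ‖∇F x‖ ^ 2`, and the last term is
discarded.
-/

section

open AffineMap Set

variable {E G : Type*} [NormedAddCommGroup E] [NormedSpace ℝ E]
  [NormedAddCommGroup G] [NormedSpace ℝ G]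

theorem norm_image_sub_sub_le_of_norm_hasFDerivWithin_sub_le {f : E → G} {f' : E → E →L[ℝ] G}
    {s : Set E} {x y : E} {L : ℝ} (hs : Convex ℝ s) (hx : x ∈ s) (hy : y ∈ s)
    (hf : ∀ z ∈ s, HasFDerivWithinAt f (f' z) s z)
    (hL : ∀ z ∈ s, ‖f' z - f' x‖ ≤ L * ‖z - x‖) :
    ‖f y - f x - f' x (y - x)‖ ≤ L / 2 * ‖y - x‖ ^ 2 := by
  have hmaps : MapsTo (lineMap x y : ℝ → E) (Icc 0 1) s := hs.mapsTo_lineMap hx hy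
  let remainder (r : ℝ) : G := f (lineMap x y r) - f x - r • f' x (y - x)
  let remainder' (r : ℝ) : G := f' (lineMap x y r) (y - x) - f' x (y - x)
  have hremainder : ∀ r ∈ Icc (0 : ℝ) 1,
      HasDerivWithinAt remainder (remainder' r) (Icc 0 1) r := fun r hr ↦ by
    have hline := (hf _ (hmaps hr)).comp_hasDerivWithinAt r hasDerivWithinAt_lineMap hmaps
    have hlinear := (hasDerivWithinAt_id r (Icc 0 1)).smul_const (f' x (y - x))
    rw [one_smul] at hlinear
    exact (hline.sub_const (f x)).sub hlinear
  have hquadratic : ∀ r : ℝ,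
      HasDerivAt (fun r ↦ L / 2 * ‖y - x‖ ^ 2 * r ^ 2) (L * ‖y - x‖ ^ 2 * r) r := fun r ↦
    ((hasDerivAt_pow 2 r).const_mul (L / 2 * ‖y - x‖ ^ 2)).congr_deriv (by ring)
  have hbound : ∀ r ∈ Ico (0 : ℝ) 1, ‖remainder' r‖ ≤ L * ‖y - x‖ ^ 2 * r := fun r hr ↦
    calc ‖remainder' r‖
      _ ≤ ‖f' (lineMap x y r) - f' x‖ * ‖y - x‖ := (f' (lineMap x y r) - f' x).le_opNorm (y - x)
      _ ≤ L * ‖lineMap x y r - x‖ * ‖y - x‖ := by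
        gcongr
        exact hL _ (hmaps (Ico_subset_Icc_self hr))
      _ = L * (r * ‖y - x‖) * ‖y - x‖ := by
        rw [lineMap_apply_module', add_sub_cancel_right, norm_smul, Real.norm_of_nonneg hr.1]
      _ = L * ‖y - x‖ ^ 2 * r := by ring
  have hfence := image_norm_le_of_norm_deriv_right_le_deriv_boundary
    (fun r hr ↦ (hremainder r hr).continuousWithinAt)
    (fun r hr ↦ (hremainder r (Ico_subset_Icc_self hr)).mono_of_mem_nhdsWithin
      (Icc_mem_nhdsGE_of_mem hr))
    (by simp [remainder]) hquadratic hbound (right_mem_Icc.2 zero_le_one)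
  simpa [remainder] using hfence

end

section

variable {E : Type*} [NormedAddCommGroup E] [InnerProductSpace ℝ E]

theorem inner_neg_smul_le_norm_sq_add_norm_sub_sq {η : ℝ} (hη : 0 < η) (g v : E) :
    ⟪g, -(η • v)⟫ ≤ -(1 / (2 * η)) * ‖-(η • v)‖ ^ 2 + η / 2 * ‖g - v‖ ^ 2 := by
  have hgap : -(1 / (2 * η)) * ‖-(η • v)‖ ^ 2 + η / 2 * ‖g - v‖ ^ 2 =
      ⟪g, -(η • v)⟫ + η / 2 * ‖g‖ ^ 2 := by
    rw [norm_neg, norm_smul, Real.norm_of_nonneg hη.le, norm_sub_sq_real, inner_neg_right,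
      real_inner_smul_right]
    field_simp
    ring
  rw [hgap]
  exact le_add_of_nonneg_right (by positivity)

variable [CompleteSpace E] {F : E → ℝ} {gradF : E → E} {s : Set E} {x y : E} {L : ℝ}

theorem sub_le_inner_add_of_norm_gradient_sub_le (hs : Convex ℝ s) (hx : x ∈ s) (hy : y ∈ s)
    (hF : ∀ z ∈ s, HasGradientWithinAt F (gradF z) s z)
    (hL : ∀ z ∈ s, ‖gradF z - gradF x‖ ≤ L * ‖z - x‖) :
    F y - F x ≤ ⟪gradF x, y - x⟫ + L / 2 * ‖y - x‖ ^ 2 := by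
  have htaylor := norm_image_sub_sub_le_of_norm_hasFDerivWithin_sub_le hs hx hy
    (fun z hz ↦ (hF z hz).hasFDerivWithinAt)
    (fun z hz ↦ by simpa only [← map_sub, LinearIsometryEquiv.norm_map] using hL z hz)
  rw [InnerProductSpace.toDual_apply_apply] at htaylor
  exact sub_le_iff_le_add'.1 ((Real.le_norm_self _).trans htaylor)

theorem flt_eq17_general (hs : Convex ℝ s) (hx : x ∈ s) (hy : y ∈ s)
    (hF : ∀ z ∈ s, HasGradientWithinAt F (gradF z) s z)
    (hL : ∀ z ∈ s, ‖gradF z - gradF x‖ ≤ L * ‖z - x‖)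
    {η : ℝ} (hη : 0 < η) {v : E} (hstep : y - x = -(η • v)) :
    F y - F x ≤ (-(1 / (2 * η)) + L / 2) * ‖y - x‖ ^ 2 + η / 2 * ‖gradF x - v‖ ^ 2 := by
  have hdescent := sub_le_inner_add_of_norm_gradient_sub_le hs hx hy hF hL
  have hinner := inner_neg_smul_le_norm_sq_add_norm_sub_sq hη (gradF x) v
  rw [← hstep] at hinner
  linarith

end

/-- Equation (17) of the paper's convergence proof. -/
theorem flt_eq17 (M d : ℕ) (hM : 1 ≤ M) (hd : 1 ≤ d)
    (Abar : Matrix (Fin M) (Fin M) ℝ)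
    (F : EuclideanSpace ℝ (Fin M × Fin d) → ℝ)
    (gradF : EuclideanSpace ℝ (Fin M × Fin d) → EuclideanSpace ℝ (Fin M × Fin d))
    (hF : ∀ V, HasGradientAt F (gradF V) V)
    (LW : ℝ)
    (hsmooth : ∀ U V : EuclideanSpace ℝ (Fin M × Fin d),
      ‖gradF U - gradF V‖ ≤ LW * ‖U - V‖)
    (η : ℝ) (hη : 0 < η)
    (W : ℕ → EuclideanSpace ℝ (Fin M × Fin d))
    (hupd : ∀ t : ℕ, 1 ≤ t →
      W t - W (t - 1) = -(η • matLeftMul M d Abar (gradF (W (t - 1)))))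
    (t : ℕ) (ht : 1 ≤ t) :
    F (W t) - F (W (t - 1)) ≤
      (-(1 / (2 * η)) + LW / 2) * ‖W t - W (t - 1)‖ ^ 2 +
        (η / 2) * ‖gradF (W (t - 1)) - matLeftMul M d Abar (gradF (W (t - 1)))‖ ^ 2 := by
  exact flt_eq17_general convex_univ (Set.mem_univ _) (Set.mem_univ _)
    (fun V _ ↦ hasGradientWithinAt_univ.2 (hF V)) (fun V _ ↦ hsmooth V _) hη (hupd t ht)
end

section
/- Suppose F : X → ℝ is L_W-smooth, the FLT iterates satisfy W^t − W^{t−1} = −η Ā ∇F(W^{t−1}) for all t ≥ 1 with step size η > 0, and for a fixed t ≥ 1 the per-step gradient-deviation bound ‖(I_M − Ā)·∇F(W^{t−1})‖ ≤ L_W · a · ‖W^t − W^{t−1}‖ holds, where a is the operator norm of the linear map V ↦ (I_M − Ā)V on X. Then F(W^t) − F(W^{t−1}) ≤ −(1/(2η) − L_W/2 − (η/2)·L_W²·a²)·‖W^t − W^{t−1}‖². (Equation (25) of the paper's convergence proof.) -/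
open scoped RealInnerProductSpace

/-!
The descent lemma bounds `F y - F x` by `⟪∇F x, y - x⟫ + L / 2 * ‖y - x‖ ^ 2`. For an inexact
gradient step `y - x = -η p`, polarization rewrites the inner product as
`η / 2 * (‖∇F x - p‖ ^ 2 - ‖∇F x‖ ^ 2 - ‖p‖ ^ 2)`. The term `‖∇F x‖ ^ 2` is discarded, the term
`‖p‖ ^ 2` is `‖y - x‖ ^ 2 / η ^ 2`, and the deviation `‖∇F x - p‖` is at most a multiple of
`‖y - x‖`. For FLT the direction is `p = Ā ∇F x`, with deviation `(I - Ā) ∇F x`.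
-/

theorem matLeftMul_one (M d : ℕ) :
    matLeftMul M d 1 = ContinuousLinearMap.id ℝ (EuclideanSpace ℝ (Fin M × Fin d)) := by
  ext1 v
  simp [matLeftMul]

theorem matLeftMul_sub (M d : ℕ) (A B : Matrix (Fin M) (Fin M) ℝ) :
    matLeftMul M d (A - B) = matLeftMul M d A - matLeftMul M d B := by
  have kronecker_sub : Matrix.kroneckerMap (· * ·) (A - B) (1 : Matrix (Fin d) (Fin d) ℝ) =
      Matrix.kroneckerMap (· * ·) A 1 - Matrix.kroneckerMap (· * ·) B 1 := by
    ext i j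
    exact sub_mul _ _ _
  simp only [matLeftMul, kronecker_sub, map_sub]

section InnerProductSpace

variable {E : Type*} [NormedAddCommGroup E] [InnerProductSpace ℝ E]

theorem inner_neg_smul_le (g p : E) {η : ℝ} (hη : 0 < η) :
    ⟪g, -(η • p)⟫ ≤ η / 2 * ‖g - p‖ ^ 2 - 1 / (2 * η) * ‖-(η • p)‖ ^ 2 := by
  have norm_step : 1 / (2 * η) * ‖-(η • p)‖ ^ 2 = η / 2 * ‖p‖ ^ 2 := by
    rw [norm_neg, norm_smul, Real.norm_of_nonneg hη.le]
    field_simp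
  calc ⟪g, -(η • p)⟫ = -(η * ⟪g, p⟫) := by rw [inner_neg_right, real_inner_smul_right]
    _ = η / 2 * (‖g - p‖ ^ 2 - ‖g‖ ^ 2 - ‖p‖ ^ 2) := by rw [norm_sub_sq_real]; ring
    _ ≤ η / 2 * (‖g - p‖ ^ 2 - ‖p‖ ^ 2) := by gcongr; linarith [sq_nonneg ‖g‖]
    _ = η / 2 * ‖g - p‖ ^ 2 - 1 / (2 * η) * ‖-(η • p)‖ ^ 2 := by rw [norm_step]; ring

variable {gradF : E → E} {L : ℝ} {x y : E}

theorem inner_lineMap_le_inner_add {s : ℝ} (hs : 0 ≤ s)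
    (hL : ‖gradF (AffineMap.lineMap x y s) - gradF x‖ ≤ L * ‖AffineMap.lineMap x y s - x‖) :
    ⟪gradF (AffineMap.lineMap x y s), y - x⟫ ≤ ⟪gradF x, y - x⟫ + s * (L * ‖y - x‖ ^ 2) := by
  have norm_lineMap_sub : ‖AffineMap.lineMap x y s - x‖ = s * ‖y - x‖ := by
    rw [← vsub_eq_sub, AffineMap.lineMap_vsub_left, vsub_eq_sub, norm_smul,
      Real.norm_of_nonneg hs]
  have inner_sub_le : ⟪gradF (AffineMap.lineMap x y s) - gradF x, y - x⟫ ≤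
      s * (L * ‖y - x‖ ^ 2) :=
    calc ⟪gradF (AffineMap.lineMap x y s) - gradF x, y - x⟫
        ≤ ‖gradF (AffineMap.lineMap x y s) - gradF x‖ * ‖y - x‖ := real_inner_le_norm _ _
      _ ≤ L * (s * ‖y - x‖) * ‖y - x‖ := by rw [← norm_lineMap_sub]; gcongr
      _ = s * (L * ‖y - x‖ ^ 2) := by ring
  rw [inner_sub_left] at inner_sub_le
  linarith

variable [CompleteSpace E] {F : E → ℝ}

theorem hasDerivAt_comp_lineMap_of_hasGradientAt {g : E} {s : ℝ}
    (hF : HasGradientAt F g (AffineMap.lineMap x y s)) :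
    HasDerivAt (fun r : ℝ ↦ F (AffineMap.lineMap x y r)) ⟪g, y - x⟫ s := by
  simpa only [InnerProductSpace.toDual_apply_apply] using!
    hF.hasFDerivAt.comp_hasDerivAt s AffineMap.hasDerivAt_lineMap

theorem sub_le_inner_add_of_gradient_lipschitz
    (hF : ∀ z ∈ segment ℝ x y, HasGradientAt F (gradF z) z)
    (hL : ∀ z ∈ segment ℝ x y, ‖gradF z - gradF x‖ ≤ L * ‖z - x‖) :
    F y - F x ≤ ⟪gradF x, y - x⟫ + L / 2 * ‖y - x‖ ^ 2 := by
  let quadraticBound (s : ℝ) : ℝ := F x + s * ⟪gradF x, y - x⟫ + s ^ 2 / 2 * (L * ‖y - x‖ ^ 2)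
  have deriv_F (s : ℝ) (hs : s ∈ Set.Icc (0 : ℝ) 1) :
      HasDerivAt (fun r : ℝ ↦ F (AffineMap.lineMap x y r))
        ⟪gradF (AffineMap.lineMap x y s), y - x⟫ s :=
    hasDerivAt_comp_lineMap_of_hasGradientAt (hF _ (lineMap_mem_segment ℝ x y hs))
  have deriv_bound (s : ℝ) : HasDerivAt quadraticBound
      (⟪gradF x, y - x⟫ + s * (L * ‖y - x‖ ^ 2)) s := by
    have := (((hasDerivAt_id s).mul_const ⟪gradF x, y - x⟫).const_add (F x)).add
      (((hasDerivAt_pow 2 s).div_const 2).mul_const (L * ‖y - x‖ ^ 2))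
    simpa using! this
  have le_bound : F (AffineMap.lineMap x y (1 : ℝ)) ≤ quadraticBound 1 :=
    image_le_of_deriv_right_le_deriv_boundary
      (fun s hs ↦ (deriv_F s hs).continuousAt.continuousWithinAt)
      (fun s hs ↦ (deriv_F s (Set.Ico_subset_Icc_self hs)).hasDerivWithinAt)
      (by simp [quadraticBound])
      (fun s _ ↦ (deriv_bound s).continuousAt.continuousWithinAt)
      (fun s _ ↦ (deriv_bound s).hasDerivWithinAt)
      (fun s hs ↦ inner_lineMap_le_inner_add hs.1
        (hL _ (lineMap_mem_segment ℝ x y (Set.Ico_subset_Icc_self hs))))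
      (Set.right_mem_Icc.2 zero_le_one)
  simp only [AffineMap.lineMap_apply_one, quadraticBound] at le_bound
  linarith

theorem flt_eq25_general {p : E} {η δ : ℝ}
    (hF : ∀ z ∈ segment ℝ x y, HasGradientAt F (gradF z) z)
    (hL : ∀ z ∈ segment ℝ x y, ‖gradF z - gradF x‖ ≤ L * ‖z - x‖)
    (hη : 0 < η) (hstep : y - x = -(η • p)) (hdev : ‖gradF x - p‖ ≤ δ * ‖y - x‖) :
    F y - F x ≤ -(1 / (2 * η) - L / 2 - η / 2 * δ ^ 2) * ‖y - x‖ ^ 2 :=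
  calc F y - F x ≤ ⟪gradF x, y - x⟫ + L / 2 * ‖y - x‖ ^ 2 :=
        sub_le_inner_add_of_gradient_lipschitz hF hL
    _ ≤ η / 2 * ‖gradF x - p‖ ^ 2 - 1 / (2 * η) * ‖y - x‖ ^ 2 + L / 2 * ‖y - x‖ ^ 2 := by
        rw [hstep]
        gcongr
        exact inner_neg_smul_le (gradF x) p hη
    _ ≤ η / 2 * (δ * ‖y - x‖) ^ 2 - 1 / (2 * η) * ‖y - x‖ ^ 2 + L / 2 * ‖y - x‖ ^ 2 := by
        gcongr
    _ = -(1 / (2 * η) - L / 2 - η / 2 * δ ^ 2) * ‖y - x‖ ^ 2 := by ring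

end InnerProductSpace

/-- Equation (25) of the paper's convergence proof. -/
theorem flt_eq25 (M d : ℕ) (hM : 1 ≤ M) (hd : 1 ≤ d)
    (Abar : Matrix (Fin M) (Fin M) ℝ)
    (F : EuclideanSpace ℝ (Fin M × Fin d) → ℝ)
    (gradF : EuclideanSpace ℝ (Fin M × Fin d) → EuclideanSpace ℝ (Fin M × Fin d))
    (hF : ∀ V, HasGradientAt F (gradF V) V)
    (LW : ℝ)
    (hsmooth : ∀ U V : EuclideanSpace ℝ (Fin M × Fin d),
      ‖gradF U - gradF V‖ ≤ LW * ‖U - V‖)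
    (η : ℝ) (hη : 0 < η)
    (W : ℕ → EuclideanSpace ℝ (Fin M × Fin d))
    (hupd : ∀ s : ℕ, 1 ≤ s →
      W s - W (s - 1) = -(η • matLeftMul M d Abar (gradF (W (s - 1)))))
    (a : ℝ) (ha : a = ‖matLeftMul M d ((1 : Matrix (Fin M) (Fin M) ℝ) - Abar)‖)
    (t : ℕ) (ht : 1 ≤ t)
    (hdev : ‖matLeftMul M d ((1 : Matrix (Fin M) (Fin M) ℝ) - Abar) (gradF (W (t - 1)))‖ ≤
      LW * a * ‖W t - W (t - 1)‖) :
    F (W t) - F (W (t - 1)) ≤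
      -(1 / (2 * η) - LW / 2 - (η / 2) * LW ^ 2 * a ^ 2) * ‖W t - W (t - 1)‖ ^ 2 := by
  rw [matLeftMul_sub, matLeftMul_one] at hdev
  simpa only [mul_pow, mul_assoc] using
    flt_eq25_general (fun z _ ↦ hF z) (fun z _ ↦ hsmooth z _) hη (hupd t ht) hdev
end
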